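/- arXiv:2308.02956 — 2 statements merged into one kernel-verified Lean document; each statement's English description precedes it below -/
import Mathlib

section
/- Let K, L, M be convex bodies in ℝ³ with L ⊂ int K and K ⊂ int M. Suppose that for every point x ∈ ∂M there is a number h(x) such that for every 2-dimensional plane H passing through x that supports L, the section H ∩ K is a planar convex set of constant width h(x). Then K and L are concentric Euclidean balls. -/
/-!
The width `h` is constant on `∂M`. The line through two nearby boundary points `x, y` of `M` misses
`L`, because a point of the interior of `M` on that line lies strictly between `x` and `y`; so the
line lies in a support plane of `L`, whose section gives `h x = h y`, and `∂M` is connected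
(`h_const`). Since every support plane of `L` meets `∂M`, all of them cut `K` in sets of one
constant width `b` (`exists_common_width`).

Fix a direction `u`. A planar set of constant width `b` has a chord of length `b` parallel to `u`
(`exists_chord`), so the closed convex union of the lines of direction `u` that carry a chord of
`K` of length at least `b` meets every support plane of `L` parallel to `u`. By separation it
contains `L` (`exists_long_chord`). Hence in a support plane touching `L` at `z`, each line through
`z` carries a chord as long as the width of the section. The radial function of the section about
`z` then equals its support function, and such a function is constant: the section is the disc of
radius `b / 2` about `z`, and `z` is the only contact point (`section_eq_disc`).

Two support planes with nearby unit normals `n₁, n₂` meet inside `K`, so their discs share a chord.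
Both centres `z₁, z₂` lie in the plane bisecting this chord, equally far from its ends, which gives
`z₁ - z₂ ∥ n₁ - n₂` (`contact_pair`). Three nearby normals share the factor of proportionality, and
the sphere is connected, so `z n = c + l n` for all unit `n` (`global_affine`). Thus `L` is the ball
of radius `l` about `c`, and Pythagoras identifies `K` with the concentric ball of squared radius
`l ^ 2 + (b / 2) ^ 2` (`balls_of_contact`).
-/

open Metric Set
open scoped RealInnerProductSpace

noncomputable section

abbrev E3 := EuclideanSpace ℝ (Fin 3)

/-- The plane `{x | ⟪w, x⟫ = d}` with normal vector `w`. -/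
def planeEq (w : E3) (d : ℝ) : Set E3 := {x | ⟪w, x⟫ = d}

/-- The plane `{x | ⟪w, x⟫ = d}` supports `L`: it meets `L` and `L` lies in one of
the closed half-spaces it bounds. -/
def PlaneSupports (L : Set E3) (w : E3) (d : ℝ) : Prop :=
  (planeEq w d ∩ L).Nonempty ∧ ∀ y ∈ L, ⟪w, y⟫ ≤ d

/-- The width of a set `S` in direction `w'`. -/
def widthIn (S : Set E3) (w' : E3) : ℝ :=
  sSup ((fun x => ⟪x, w'⟫) '' S) - sInf ((fun x => ⟪x, w'⟫) '' S)

/-- A subset of the plane with normal `w` has constant width `h` if its width equals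
`h` in every unit direction parallel to the plane. -/
def HasConstWidthIn (S : Set E3) (w : E3) (h : ℝ) : Prop :=
  ∀ w' : E3, ‖w'‖ = 1 → ⟪w', w⟫ = 0 → widthIn S w' = h

/-! ### Topological and linear-algebraic preliminaries -/

lemma const_of_eventually {X β : Type*} [TopologicalSpace X] {s : Set X} (hs : IsPreconnected s)
    (f : X → β) (hf : ∀ x ∈ s, ∃ U ∈ nhds x, ∀ y ∈ U, y ∈ s → f y = f x) :
    ∀ x ∈ s, ∀ y ∈ s, f x = f y := by
  intro x hx y hy
  have : PreconnectedSpace s := isPreconnected_iff_preconnectedSpace.mp hs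
  have hl : IsLocallyConstant (fun a : s => f a) := by
    rw [IsLocallyConstant.iff_eventually_eq]
    intro a
    obtain ⟨U, hU, h⟩ := hf a a.2
    filter_upwards [continuous_subtype_val.continuousAt.preimage_mem_nhds hU] with b hb
    exact h b hb b.2
  exact hl.apply_eq_of_preconnectedSpace ⟨x, hx⟩ ⟨y, hy⟩

lemma one_lt_rank_E3 : 1 < Module.rank ℝ E3 := by
  apply Module.one_lt_rank_of_one_lt_finrank
  simp

lemma isPreconnected_frontier {M : Set E3} (hMcpt : IsCompact M) (hMconv : Convex ℝ M)
    (hMint : (interior M).Nonempty) : IsPreconnected (frontier M) := by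
  obtain ⟨g, -, -, hg⟩ :=
    exists_homeomorph_image_interior_closure_frontier_eq_unitBall hMconv hMint hMcpt.isBounded
  have : frontier M = g.symm '' sphere 0 1 := by
    rw [← hg, ← image_comp]; simp
  rw [this]
  exact (isPreconnected_sphere one_lt_rank_E3 0 1).image _ g.symm.continuous.continuousOn

/-- Two vectors of `ℝ³` have a common nonzero normal vector. -/
lemma exists_orthogonal_pair (a b : E3) : ∃ u : E3, ‖u‖ = 1 ∧ ⟪a, u⟫ = 0 ∧ ⟪b, u⟫ = 0 := by
  have h1 : Module.finrank ℝ (Submodule.span ℝ {a, b}) ≤ 2 := by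
    have := finrank_span_finset_le_card (R := ℝ) ({a, b} : Finset E3)
    simp only [Finset.coe_insert, Finset.coe_singleton] at this
    exact this.trans Finset.card_le_two
  have h2 : (Submodule.span ℝ {a, b})ᗮ ≠ ⊥ := by
    intro h
    have h3 := Submodule.finrank_add_finrank_orthogonal (Submodule.span ℝ {a, b})
    rw [h] at h3
    simp at h3
    omega
  obtain ⟨v, hv, hv0⟩ := Submodule.exists_mem_ne_zero_of_ne_bot h2
  have ha := (Submodule.mem_orthogonal _ _).1 hv a (Submodule.subset_span (by simp))
  have hb := (Submodule.mem_orthogonal _ _).1 hv b (Submodule.subset_span (by simp))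
  refine ⟨‖v‖⁻¹ • v, ?_, ?_, ?_⟩
  · simp [norm_smul, hv0]
  · rw [inner_smul_right, ha, mul_zero]
  · rw [inner_smul_right, hb, mul_zero]

/-- A continuous linear functional on `ℝ³` is an inner product. -/
lemma exists_inner_eq (f : StrongDual ℝ E3) : ∃ w : E3, ∀ x, f x = ⟪w, x⟫ :=
  ⟨(InnerProductSpace.toDual ℝ E3).symm f, fun x => by simp⟩

/-- A functional that is bounded below on a line is constant along it. -/
lemma eq_zero_of_bddBelow_line {a b v : ℝ} (h : ∀ t : ℝ, v < a + t * b) : b = 0 := by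
  by_contra hb
  have := h ((v - a) / b)
  rw [div_mul_cancel₀ _ hb] at this
  linarith

/-! ### Support planes through points of `∂M` -/

/-- A line `x + ℝu` that misses `L` lies in a support plane of `L`: among the normals orthogonal
to `u` (a connected set, once `0` is removed) some separate `L` from the line, and their opposites
do the contrary. -/
lemma exists_support_of_line {L : Set E3} (hLcpt : IsCompact L) (hLconv : Convex ℝ L)
    (hLne : L.Nonempty) (x u : E3) (hu : u ≠ 0) (hline : ∀ t : ℝ, x + t • u ∉ L) :
    ∃ w : E3, w ≠ 0 ∧ ⟪w, u⟫ = 0 ∧ PlaneSupports L w ⟪w, x⟫ := by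
  set g : E3 → ℝ := fun w => sSup ((fun y => ⟪w, y⟫) '' L) with hg
  have hgc : Continuous g := by
    apply hLcpt.continuous_sSup (f := fun w y : E3 => (⟪w, y⟫ : ℝ))
    exact continuous_inner
  have hgmax : ∀ w, ∃ y ∈ L, g w = ⟪w, y⟫ ∧ ∀ z ∈ L, ⟪w, z⟫ ≤ g w := by
    intro w
    obtain ⟨y, hy, h1, h2⟩ := hLcpt.exists_sSup_image_eq_and_ge hLne
      (f := fun y : E3 => (⟪w, y⟫ : ℝ)) (by fun_prop)
    exact ⟨y, hy, h1, fun z hz => by simp only [hg]; rw [h1]; exact h2 z hz⟩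
  obtain ⟨w₀, hw₀u, hw₀⟩ : ∃ w : E3, ⟪w, u⟫ = 0 ∧ ∀ y ∈ L, ⟪w, y⟫ < ⟪w, x⟫ := by
    have hcl : IsClosed (range fun t : ℝ => x + t • u) :=
      ((Homeomorph.addLeft x).isClosedEmbedding.comp
        (isClosedEmbedding_smul_left hu)).isClosed_range
    have hcv : Convex ℝ (range fun t : ℝ => x + t • u) := by
      rintro _ ⟨s, rfl⟩ _ ⟨t, rfl⟩ a b ha hb hab
      refine ⟨a * s + b * t, ?_⟩
      have : x = a • x + b • x := by rw [← add_smul, hab, one_smul]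
      simp only
      nth_rewrite 1 [this]
      module
    obtain ⟨f, p, q, h1, h2, h3⟩ := geometric_hahn_banach_compact_closed hLconv hLcpt hcv hcl
      (by
        rw [Set.disjoint_left]
        rintro y hy ⟨t, rfl⟩
        exact hline t hy)
    obtain ⟨w, hw⟩ := exists_inner_eq f
    refine ⟨w, ?_, ?_⟩
    · apply eq_zero_of_bddBelow_line (a := ⟪w, x⟫) (v := q)
      intro t
      have := h3 _ ⟨t, rfl⟩
      rw [hw, inner_add_right, inner_smul_right] at this
      exact this
    · intro y hy
      have h4 := h1 y hy
      have h5 := h3 _ ⟨0, rfl⟩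
      rw [hw] at h4 h5
      simp only [zero_smul, add_zero] at h5
      linarith
  have hw₀0 : w₀ ≠ 0 := by
    rintro rfl
    obtain ⟨y, hy⟩ := hLne
    simpa using hw₀ y hy
  have hrank : 1 < Module.rank ℝ (ℝ ∙ u)ᗮ := by
    apply Module.one_lt_rank_of_one_lt_finrank
    have h3 := Submodule.finrank_add_finrank_orthogonal (ℝ ∙ u)
    rw [finrank_span_singleton hu] at h3
    simp at h3
    omega
  have hpre := (isConnected_compl_singleton_of_one_lt_rank hrank 0).isPreconnected
  have hmem : w₀ ∈ (ℝ ∙ u)ᗮ := by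
    rw [Submodule.mem_orthogonal_singleton_iff_inner_left]; exact hw₀u
  have hivt := hpre.intermediate_value (a := ⟨w₀, hmem⟩) (b := -⟨w₀, hmem⟩)
    (f := fun w => g w - ⟪(w : E3), x⟫) (by simpa using hw₀0) (by simpa using hw₀0)
    (by fun_prop)
  have h0 : (0 : ℝ) ∈ Icc (g w₀ - ⟪w₀, x⟫) (g (-w₀) - ⟪-w₀, x⟫) := by
    constructor
    · obtain ⟨y, hy, h1, -⟩ := hgmax w₀
      rw [h1]; linarith [hw₀ y hy]
    · obtain ⟨y, hy⟩ := hLne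
      obtain ⟨-, -, -, h2⟩ := hgmax (-w₀)
      have := h2 y hy
      rw [inner_neg_left] at this ⊢
      linarith [hw₀ y hy]
  obtain ⟨w, hwne, hw⟩ := hivt h0
  obtain ⟨y, hy, h1, h2⟩ := hgmax w
  simp only at hw
  have hgw : g w = ⟪(w : E3), x⟫ := by linarith
  refine ⟨w, by simpa using hwne, ?_, ⟨y, ?_, hy⟩, fun z hz => hgw ▸ h2 z hz⟩
  · exact (Submodule.mem_orthogonal_singleton_iff_inner_left).1 w.2
  · exact h1.symm.trans hgw

/-- The width `h` does not depend on the point of `∂M`: it is locally constant, since the line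
through two nearby boundary points of `M` misses `L` and so lies in a common support plane. -/
lemma h_const {K L M : Set E3}
    (hLcpt : IsCompact L) (hLconv : Convex ℝ L) (hLne : L.Nonempty)
    (hMcpt : IsCompact M) (hMconv : Convex ℝ M) (hMint : (interior M).Nonempty)
    (hLM : L ⊆ interior M) (h : E3 → ℝ)
    (hwidth : ∀ x ∈ frontier M, ∀ w : E3, w ≠ 0 →
      PlaneSupports L w ⟪w, x⟫ → HasConstWidthIn (planeEq w ⟪w, x⟫ ∩ K) w (h x)) :
    ∀ x ∈ frontier M, ∀ y ∈ frontier M, h x = h y := by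
  apply const_of_eventually (isPreconnected_frontier hMcpt hMconv hMint)
  intro x hx
  have hxL : x ∉ L := fun hxL => hx.2 (hLM hxL)
  have hpos : 0 < infDist x L := (hLcpt.isClosed.notMem_iff_infDist_pos hLne).1 hxL
  refine ⟨ball x (infDist x L), ball_mem_nhds _ hpos, fun y hy hyM => ?_⟩
  rcases eq_or_ne y x with rfl | hne
  · rfl
  have hxM' : x ∈ M := hMcpt.isClosed.frontier_subset hx
  have hyM' : y ∈ M := hMcpt.isClosed.frontier_subset hyM
  have hline : ∀ t : ℝ, x + t • (y - x) ∉ L := by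
    intro t ht
    rcases lt_or_ge t 0 with h0 | h0
    · apply hx.2
      apply hMconv.openSegment_interior_self_subset_interior (hLM ht) hyM'
      have h1 : 0 < 1 - t := by linarith
      refine ⟨1 / (1 - t), (-t) / (1 - t), by positivity, div_pos (by linarith) h1,
        by field_simp; ring, ?_⟩
      match_scalars <;> (field_simp; ring)
    · rcases le_or_gt t 1 with h1 | h1
      · have h2 := infDist_le_dist_of_mem (x := x) ht
        rw [mem_ball, dist_comm, dist_eq_norm'] at hy
        rw [dist_eq_norm', add_sub_cancel_left, norm_smul, Real.norm_of_nonneg h0] at h2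
        nlinarith [norm_nonneg (y - x)]
      · apply hyM.2
        apply hMconv.openSegment_interior_self_subset_interior (hLM ht) hxM'
        have h3 : 0 < t := by linarith
        refine ⟨1 / t, (t - 1) / t, by positivity, div_pos (by linarith) h3,
          by field_simp; ring, ?_⟩
        match_scalars <;> field_simp <;> ring
  obtain ⟨w, hw0, hwu, hs⟩ :=
    exists_support_of_line hLcpt hLconv hLne x (y - x) (sub_ne_zero.2 hne) hline
  have hxy : (⟪w, y⟫ : ℝ) = ⟪w, x⟫ := by
    rw [inner_sub_right] at hwu; linarith
  have h1 := hwidth x hx w hw0 hs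
  have h2 := hwidth y hyM w hw0 (by rw [hxy]; exact hs)
  rw [hxy] at h2
  obtain ⟨u, hu1, hu2, -⟩ := exists_orthogonal_pair w w
  rw [real_inner_comm] at hu2
  rw [← h1 u hu1 hu2, ← h2 u hu1 hu2]

/-- All sections of `K` by support planes of `L` have the same constant width. -/
lemma exists_common_width {K L M : Set E3}
    (hLcpt : IsCompact L) (hLconv : Convex ℝ L) (hLne : L.Nonempty)
    (hMcpt : IsCompact M) (hMconv : Convex ℝ M) (hMint : (interior M).Nonempty)
    (hLM : L ⊆ interior M) (h : E3 → ℝ)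
    (hwidth : ∀ x ∈ frontier M, ∀ w : E3, w ≠ 0 →
      PlaneSupports L w ⟪w, x⟫ → HasConstWidthIn (planeEq w ⟪w, x⟫ ∩ K) w (h x)) :
    ∃ b : ℝ, ∀ w : E3, w ≠ 0 → ∀ z ∈ L, (∀ y ∈ L, ⟪w, y⟫ ≤ ⟪w, z⟫) →
      HasConstWidthIn (planeEq w ⟪w, z⟫ ∩ K) w b := by
  have key : ∀ w : E3, w ≠ 0 → ∀ z ∈ L, (∀ y ∈ L, ⟪w, y⟫ ≤ ⟪w, z⟫) →
      ∃ x ∈ frontier M, (⟪w, x⟫ : ℝ) = ⟪w, z⟫ := by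
    intro w _ z hz _
    obtain ⟨u, hu1, hu2, -⟩ := exists_orthogonal_pair w w
    obtain ⟨R, hR⟩ := hMcpt.isBounded.subset_closedBall z
    have hpre : IsPreconnected (range fun t : ℝ => z + t • u) :=
      isPreconnected_range (by fun_prop)
    obtain ⟨x, ⟨t, rfl⟩, hx⟩ : ((range fun t : ℝ => z + t • u) ∩ frontier M).Nonempty := by
      rw [Set.nonempty_iff_ne_empty]
      intro hemp
      have hcov : (range fun t : ℝ => z + t • u) ⊆ interior M ∪ Mᶜ := by
        intro x hx
        by_contra hx'
        simp only [mem_union, mem_compl_iff, not_or, not_not] at hx'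
        exact (hemp ▸ (⟨hx, subset_closure hx'.2, hx'.1⟩ :
          x ∈ (range fun t : ℝ => z + t • u) ∩ frontier M) : x ∈ (∅ : Set E3))
      obtain ⟨x, -, hx1, hx2⟩ := hpre _ _ isOpen_interior hMcpt.isClosed.isOpen_compl hcov
        ⟨z, ⟨0, by simp⟩, hLM hz⟩
        ⟨z + (|R| + 1) • u, ⟨_, rfl⟩, fun hmem => by
          have := hR hmem
          rw [mem_closedBall, dist_eq_norm, add_sub_cancel_left, norm_smul, hu1, mul_one,
            Real.norm_of_nonneg (by positivity)] at this
          linarith [le_abs_self R]⟩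
      exact hx2 (interior_subset hx1)
    refine ⟨_, hx, ?_⟩
    simp only
    rw [inner_add_right, inner_smul_right, hu2, mul_zero, add_zero]
  have hconst := h_const hLcpt hLconv hLne hMcpt hMconv hMint hLM h hwidth
  obtain ⟨u, hu1, -⟩ := exists_orthogonal_pair 0 0
  have hu0 : u ≠ 0 := by rintro rfl; simp at hu1
  obtain ⟨z₀, hz₀, hm₀⟩ := hLcpt.exists_isMaxOn hLne
    (f := fun y : E3 => (⟪u, y⟫ : ℝ)) (by fun_prop)
  obtain ⟨x₀, hx₀, -⟩ := key u hu0 z₀ hz₀ hm₀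
  refine ⟨h x₀, fun w hw z hz hmax => ?_⟩
  obtain ⟨x, hx, hxz⟩ := key w hw z hz hmax
  rw [hconst x₀ hx₀ x hx, ← hxz]
  exact hwidth x hx w hw ⟨⟨z, hxz.symm, hz⟩, fun y hy => hxz ▸ hmax y hy⟩

/-! ### Sections of constant width are discs centred at the contact point -/

lemma widthIn_spec {S : Set E3} (hS : IsCompact S) (hne : S.Nonempty) (v : E3) :
    (∃ x ∈ S, ∃ y ∈ S, widthIn S v = ⟪x, v⟫ - ⟪y, v⟫) ∧
      ∀ x ∈ S, ∀ y ∈ S, (⟪x, v⟫ : ℝ) - ⟪y, v⟫ ≤ widthIn S v := by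
  have hc : ContinuousOn (fun x : E3 => (⟪x, v⟫ : ℝ)) S := by fun_prop
  obtain ⟨x, hx, h1, h2⟩ := hS.exists_sSup_image_eq_and_ge hne hc
  obtain ⟨y, hy, h3, h4⟩ := hS.exists_sInf_image_eq_and_le hne hc
  refine ⟨⟨x, hx, y, hy, ?_⟩, fun x' hx' y' hy' => ?_⟩
  · rw [widthIn, h1, h3]
  · rw [widthIn, h1, h3]
    exact sub_le_sub (h2 x' hx') (h4 y' hy')

open scoped Pointwise in
/-- A planar convex set of constant width `b` has a chord of length `b` in every direction: by
separation, its difference body is the disc of radius `b`. -/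
lemma exists_chord {S : Set E3} (hS : IsCompact S) (hSc : Convex ℝ S) (hne : S.Nonempty)
    {n : E3} (hn : n ≠ 0) {d b : ℝ} (hpl : ∀ x ∈ S, (⟪n, x⟫ : ℝ) = d)
    (hw : HasConstWidthIn S n b) {u : E3} (hu1 : ‖u‖ = 1) (hun : ⟪u, n⟫ = 0) :
    ∃ x ∈ S, x + b • u ∈ S := by
  have hmem : b • u ∈ S - S := by
    by_contra hnot
    have hcpt : IsCompact (S - S) := by
      rw [sub_eq_add_neg]; exact hS.add hS.neg
    obtain ⟨f, s, h1, h2⟩ := geometric_hahn_banach_closed_point (hSc.sub hSc) hcpt.isClosed hnot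
    obtain ⟨m, hm⟩ := exists_inner_eq f
    -- the part of the separating normal parallel to the plane
    obtain ⟨m', c, hm', hmn⟩ : ∃ m' : E3, ∃ c : ℝ, m = m' + c • n ∧ ⟪m', n⟫ = 0 := by
      refine ⟨m - (⟪m, n⟫ / ⟪n, n⟫) • n, _, (sub_add_cancel _ _).symm, ?_⟩
      rw [inner_sub_left, real_inner_smul_left, div_mul_cancel₀, sub_self]
      exact inner_self_ne_zero.2 hn
    have hfu : f (b • u) = b * ⟪m', u⟫ := by
      rw [hm, hm', inner_smul_right, inner_add_left, real_inner_smul_left,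
        real_inner_comm u n, hun]
      ring
    have hfS : ∀ x ∈ S, ∀ y ∈ S, f (x - y) = ⟪x, m'⟫ - ⟪y, m'⟫ := by
      intro x hx y hy
      rw [hm, hm', inner_sub_right, inner_add_left, inner_add_left, real_inner_smul_left,
        real_inner_smul_left, hpl x hx, hpl y hy, real_inner_comm x, real_inner_comm y]
      ring
    obtain ⟨x₀, hx₀⟩ := hne
    have hs : 0 < s := by simpa using h1 _ (sub_mem_sub hx₀ hx₀)
    have hm'0 : m' ≠ 0 := by
      rintro rfl
      rw [hfu] at h2
      simp at h2
      linarith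
    have hmpos : 0 < ‖m'‖ := norm_pos_iff.2 hm'0
    obtain ⟨⟨x, hx, y, hy, hxy⟩, hle⟩ := widthIn_spec hS ⟨x₀, hx₀⟩ (‖m'‖⁻¹ • m')
    rw [hw (‖m'‖⁻¹ • m') (by simp [norm_smul, hm'0])
      (by rw [real_inner_smul_left, hmn, mul_zero])] at hxy hle
    have hb : 0 ≤ b := by simpa using hle x₀ hx₀ x₀ hx₀
    have h3 := h1 _ (sub_mem_sub hx hy)
    rw [hfS x hx y hy] at h3
    rw [inner_smul_right, inner_smul_right, ← mul_sub] at hxy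
    have h4 : ‖m'‖ * b = ⟪x, m'⟫ - ⟪y, m'⟫ := by
      rw [hxy, mul_inv_cancel_left₀ hmpos.ne']
    have h5 : (⟪m', u⟫ : ℝ) ≤ ‖m'‖ := by
      have := real_inner_le_norm m' u
      rwa [hu1, mul_one] at this
    have h6 := mul_le_mul_of_nonneg_left h5 hb
    rw [hfu] at h2
    linarith
  obtain ⟨y, hy, x, hx, hyx⟩ := hmem
  refine ⟨x, hx, ?_⟩
  have : x + b • u = y := by rw [← hyx]; simp
  rwa [this]

/-- The hypothesis extracted from `M`: every support plane of `L` cuts `K` in a set of constant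
width `b`. -/
def CommonWidth (K L : Set E3) (b : ℝ) : Prop :=
  ∀ w : E3, w ≠ 0 → ∀ z ∈ L, (∀ y ∈ L, ⟪w, y⟫ ≤ ⟪w, z⟫) →
      HasConstWidthIn (planeEq w ⟪w, z⟫ ∩ K) w b

lemma isCompact_section {K : Set E3} (hK : IsCompact K) (w : E3) (d : ℝ) :
    IsCompact (planeEq w d ∩ K) :=
  hK.inter_left (isClosed_eq (by fun_prop) continuous_const)

lemma convex_section {K : Set E3} (hK : Convex ℝ K) (w : E3) (d : ℝ) :
    Convex ℝ (planeEq w d ∩ K) := by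
  refine Convex.inter ?_ hK
  exact convex_hyperplane (f := fun x : E3 => (⟪w, x⟫ : ℝ)) (innerₛₗ ℝ w).isLinear d

open scoped Pointwise in
/-- Every line that meets `L` carries a chord of `K` of length at least `b`. Indeed the union of
the lines of direction `u` carrying such a chord is closed and convex, and it meets every support
plane of `L` parallel to `u`, so no plane separates it from a point of `L`. -/
lemma exists_long_chord {K L : Set E3} (hK : IsCompact K) (hKc : Convex ℝ K)
    (hL : IsCompact L) (hLK : L ⊆ K) {b : ℝ} (hb : CommonWidth K L b)
    {z u : E3} (hz : z ∈ L) (hu : ‖u‖ = 1) :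
    ∃ t : ℝ, z + t • u ∈ K ∧ z + (t + b) • u ∈ K := by
  set C : Set E3 := K ∩ (fun x => x + b • u) ⁻¹' K with hC
  have hmeet : ∀ m : E3, m ≠ 0 → ⟪m, u⟫ = 0 → ∃ x ∈ C, ∀ y ∈ L, (⟪m, y⟫ : ℝ) ≤ ⟪m, x⟫ := by
    intro m hm hmu
    obtain ⟨y, hy, hmax⟩ := hL.exists_isMaxOn ⟨z, hz⟩
      (f := fun y : E3 => (⟪m, y⟫ : ℝ)) (by fun_prop)
    obtain ⟨x, hx, hx'⟩ := exists_chord (isCompact_section hK m ⟪m, y⟫)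
      (convex_section hKc m ⟪m, y⟫) ⟨y, rfl, hLK hy⟩ hm (fun x hx => hx.1) (hb m hm y hy hmax) hu
      (by rw [real_inner_comm]; exact hmu)
    have hxy : (⟪m, x⟫ : ℝ) = ⟪m, y⟫ := hx.1
    exact ⟨x, ⟨hx.2, hx'.2⟩, fun y' hy' => hxy ▸ hmax hy'⟩
  have hCcpt : IsCompact C := hK.inter_right (hK.isClosed.preimage (by fun_prop))
  have hCconv : Convex ℝ C := hKc.inter (hKc.translate_preimage_left _)
  have hmem : z ∈ C + ((ℝ ∙ u : Submodule ℝ E3) : Set E3) := by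
    by_contra hnot
    have hcl : IsClosed (C + ((ℝ ∙ u : Submodule ℝ E3) : Set E3)) :=
      IsClosed.add_left_of_isCompact (Submodule.closed_of_finiteDimensional _) hCcpt
    obtain ⟨f, s, h1, h2⟩ := geometric_hahn_banach_closed_point
      (hCconv.add (Submodule.convex _)) hcl hnot
    obtain ⟨m, hm⟩ := exists_inner_eq f
    obtain ⟨m₀, hm₀1, hm₀u, -⟩ := exists_orthogonal_pair u u
    obtain ⟨c, hc, -⟩ := hmeet m₀ (by rintro rfl; simp at hm₀1)
      (by rw [real_inner_comm]; exact hm₀u)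
    have hmu : (⟪m, u⟫ : ℝ) = 0 := by
      apply eq_zero_of_bddBelow_line (a := -⟪m, c⟫) (v := -s)
      intro t
      have := h1 _ (add_mem_add hc (Submodule.smul_mem _ (-t) (Submodule.mem_span_singleton_self u)))
      rw [hm, inner_add_right, inner_smul_right] at this
      linarith
    have h1' : ∀ x ∈ C, (⟪m, x⟫ : ℝ) < s := by
      intro x hx
      have := h1 _ (add_mem_add hx (Submodule.zero_mem (ℝ ∙ u)))
      rwa [hm, add_zero] at this
    rw [hm] at h2
    have hm0 : m ≠ 0 := by
      rintro rfl
      have := h1' c hc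
      simp at this h2
      linarith
    obtain ⟨x, hx, hx'⟩ := hmeet m hm0 hmu
    linarith [h1' x hx, hx' z hz]
  obtain ⟨c, hc, v, hv, hcv⟩ := hmem
  obtain ⟨t, rfl⟩ := Submodule.mem_span_singleton.1 hv
  have hcz : c = z + (-t) • u := by rw [← hcv]; module
  refine ⟨-t, hcz ▸ hc.1, ?_⟩
  have := hc.2
  rw [mem_preimage, hcz] at this
  rwa [add_smul, ← add_assoc]

lemma const_of_abs_sub_le_sq {f : ℝ → ℝ} {C : ℝ} (h : ∀ x y, |f y - f x| ≤ C * (y - x) ^ 2)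
    (x y : ℝ) : f x = f y := by
  have hd : ∀ x, HasDerivAt f 0 x := by
    intro x
    rw [hasDerivAt_iff_isLittleO]
    simp only [smul_zero, sub_zero]
    have h1 : (fun y => f y - f x) =O[nhds x] fun y => (y - x) ^ 2 :=
      Asymptotics.IsBigO.of_bound C (Filter.Eventually.of_forall fun y => by
        simpa using h x y)
    have h2 := Asymptotics.isLittleO_pow_sub_sub x one_lt_two
    simp only [Real.norm_eq_abs, sq_abs] at h2
    exact h1.trans_isLittleO h2
  exact is_const_of_deriv_eq_zero (fun x => (hd x).differentiableAt) (fun x => (hd x).deriv) x y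

/-- Every support plane of `L` touches `L` at a point `z` and cuts `K` in the disc of radius `b / 2`
about `z`. The radial function `ρ` of the section about `z` is also its support function, since
the chords through `z` have the length `b` of the width; hence `ρ v * cos ∠(u, v) ≤ ρ u`, which
forces `ρ` to be constant on the circle of directions. -/
lemma section_eq_disc {K L : Set E3} (hK : IsCompact K) (hKc : Convex ℝ K)
    (hL : IsCompact L) (hLK : L ⊆ K) {b : ℝ} (hb : CommonWidth K L b)
    {n z : E3} (hn : n ≠ 0) (hz : z ∈ L) (hmax : ∀ y ∈ L, ⟪n, y⟫ ≤ ⟪n, z⟫) (p : E3)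
    (hp : (⟪n, p⟫ : ℝ) = ⟪n, z⟫) : p ∈ K ↔ ‖p - z‖ ≤ b / 2 := by
  have hzK := hLK hz
  have hS := isCompact_section hK n ⟪n, z⟫
  have hw := hb n hn z hz hmax
  have hex : ∀ u : E3, ∃ r : ℝ, ‖u‖ = 1 → ⟪u, n⟫ = 0 → (z + r • u ∈ K ∧ z + (r - b) • u ∈ K ∧
      ∀ s ∈ K, (⟪n, s⟫ : ℝ) = ⟪n, z⟫ → ⟪s - z, u⟫ ≤ r) := by
    intro u
    by_cases hu : ‖u‖ = 1 ∧ ⟪u, n⟫ = 0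
    · obtain ⟨hu1, hun⟩ := hu
      obtain ⟨t, h1, h2⟩ := exists_long_chord hK hKc hL hLK hb hz hu1
      refine ⟨t + b, fun _ _ => ⟨h2, by simpa using h1, fun s hs hsn => ?_⟩⟩
      have hle := (widthIn_spec hS ⟨z, rfl, hzK⟩ u).2 s ⟨hsn, hs⟩ (z + t • u)
        ⟨by change (⟪n, z + t • u⟫ : ℝ) = _
            rw [inner_add_right, inner_smul_right, real_inner_comm u, hun]; simp, h1⟩
      rw [hw u hu1 hun, inner_add_left, real_inner_smul_left, real_inner_self_eq_norm_sq, hu1]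
        at hle
      rw [inner_sub_left]
      linarith
    · exact ⟨0, fun h1 h2 => absurd ⟨h1, h2⟩ hu⟩
  choose ρ hρ using hex
  have hinpl : ∀ (u : E3) (t : ℝ), ⟪u, n⟫ = 0 → (⟪n, z + t • u⟫ : ℝ) = ⟪n, z⟫ := by
    intro u t hu
    rw [inner_add_right, inner_smul_right, real_inner_comm u, hu, mul_zero, add_zero]
  have hcos : ∀ u v : E3, ‖u‖ = 1 → ⟪u, n⟫ = 0 → ‖v‖ = 1 → ⟪v, n⟫ = 0 →
      ρ v * ⟪v, u⟫ ≤ ρ u := by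
    intro u v hu hun hv hvn
    have := (hρ u hu hun).2.2 _ (hρ v hv hvn).1 (hinpl v _ hvn)
    rwa [add_sub_cancel_left, real_inner_smul_left] at this
  have hnonneg : ∀ u : E3, ‖u‖ = 1 → ⟪u, n⟫ = 0 → 0 ≤ ρ u := by
    intro u hu hun
    simpa using (hρ u hu hun).2.2 z hzK rfl
  have hneg : ∀ u : E3, ‖u‖ = 1 → ⟪u, n⟫ = 0 → ρ (-u) = b - ρ u := by
    intro u hu hun
    have hu' : ‖-u‖ = 1 := by rwa [norm_neg]
    have hun' : ⟪-u, n⟫ = 0 := by rw [inner_neg_left, hun, neg_zero]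
    have huu : (⟪u, u⟫ : ℝ) = 1 := by rw [real_inner_self_eq_norm_sq, hu]; norm_num
    have h1 := (hρ (-u) hu' hun').2.2 _ (hρ u hu hun).2.1 (hinpl u _ hun)
    have h2 := (widthIn_spec hS ⟨z, rfl, hzK⟩ u).2
      _ ⟨hinpl u _ hun, (hρ u hu hun).1⟩ _ ⟨hinpl (-u) _ hun', (hρ (-u) hu' hun').1⟩
    rw [add_sub_cancel_left, real_inner_smul_left, inner_neg_right, huu] at h1
    rw [hw u hu hun, inner_add_left, inner_add_left, real_inner_smul_left, real_inner_smul_left,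
      inner_neg_left, huu] at h2
    linarith
  have hρeq : ∀ u : E3, ‖u‖ = 1 → ⟪u, n⟫ = 0 → ρ u = b / 2 := by
    intro u hu hun
    obtain ⟨v, hv, huv, hnv⟩ := exists_orthogonal_pair u n
    rw [real_inner_comm] at hnv
    set γ : ℝ → E3 := fun θ => Real.cos θ • u + Real.sin θ • v with hγ
    have huu : (⟪u, u⟫ : ℝ) = 1 := by rw [real_inner_self_eq_norm_sq, hu]; norm_num
    have hvv : (⟪v, v⟫ : ℝ) = 1 := by rw [real_inner_self_eq_norm_sq, hv]; norm_num
    have hvu : (⟪v, u⟫ : ℝ) = 0 := by rw [real_inner_comm]; exact huv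
    have hγγ : ∀ θ φ, (⟪γ θ, γ φ⟫ : ℝ) = Real.cos (φ - θ) := by
      intro θ φ
      simp only [hγ, inner_add_left, inner_add_right, real_inner_smul_left, inner_smul_right,
        huu, hvv, huv, hvu, Real.cos_sub]
      ring
    have hγ1 : ∀ θ, ‖γ θ‖ = 1 := by
      intro θ
      have := hγγ θ θ
      rw [real_inner_self_eq_norm_sq, sub_self, Real.cos_zero] at this
      exact (pow_eq_one_iff_of_nonneg (norm_nonneg _) two_ne_zero).1 this
    have hγn : ∀ θ, ⟪γ θ, n⟫ = 0 := by
      intro θ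
      simp only [hγ, inner_add_left, real_inner_smul_left, hun, hnv]
      simp
    have hbd : ∀ θ, ρ (γ θ) ≤ b := by
      intro θ
      have h1 := hneg _ (hγ1 θ) (hγn θ)
      have h2 := hnonneg (-γ θ) (by rw [norm_neg, hγ1]) (by rw [inner_neg_left, hγn, neg_zero])
      linarith
    have hone : ∀ θ φ, ρ (γ θ) - ρ (γ φ) ≤ (b / 2) * (θ - φ) ^ 2 := by
      intro θ φ
      have h1 := hcos _ _ (hγ1 φ) (hγn φ) (hγ1 θ) (hγn θ)
      rw [hγγ] at h1
      have h2 := Real.one_sub_sq_div_two_le_cos (x := φ - θ)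
      have h3 := hnonneg _ (hγ1 θ) (hγn θ)
      nlinarith [hbd θ, mul_le_mul_of_nonneg_left h2 h3,
        mul_le_mul_of_nonneg_right (hbd θ) (sq_nonneg (φ - θ))]
    have hconst := const_of_abs_sub_le_sq (f := fun θ => ρ (γ θ)) (C := b / 2)
      (fun x y => abs_le.2 ⟨by linarith [hone x y, sub_sq_comm x y], hone y x⟩) 0 Real.pi
    have h0 : γ 0 = u := by simp [hγ]
    have hπ : γ Real.pi = -u := by simp [hγ]
    simp only [h0, hπ] at hconst
    linarith [hneg u hu hun]
  have hb0 : 0 ≤ b / 2 := by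
    obtain ⟨v, hv, hnv, -⟩ := exists_orthogonal_pair n n
    rw [real_inner_comm] at hnv
    rw [← hρeq v hv hnv]
    exact hnonneg v hv hnv
  rcases eq_or_ne p z with rfl | hpz
  · simp [hzK, hb0]
  have hpos : 0 < ‖p - z‖ := norm_pos_iff.2 (sub_ne_zero.2 hpz)
  set u := ‖p - z‖⁻¹ • (p - z) with hu
  have hu1 : ‖u‖ = 1 := by rw [hu, norm_smul, norm_inv, norm_norm, inv_mul_cancel₀ hpos.ne']
  have hun : ⟪u, n⟫ = 0 := by
    rw [hu, real_inner_smul_left, real_inner_comm, inner_sub_right, hp, sub_self, mul_zero]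
  have hpu : p = z + ‖p - z‖ • u := by
    rw [hu, smul_inv_smul₀ hpos.ne']; abel
  have hρu := hρ u hu1 hun
  rw [hρeq u hu1 hun] at hρu
  constructor
  · intro hpK
    have := hρu.2.2 p hpK hp
    rwa [hu, inner_smul_right, real_inner_self_eq_norm_sq, sq, inv_mul_cancel_left₀ hpos.ne']
      at this
  · intro hle
    have hb1 : 0 < b / 2 := hpos.trans_le hle
    have := hKc.add_smul_sub_mem hzK hρu.1 (t := ‖p - z‖ / (b / 2))
      ⟨by positivity, (div_le_one hb1).2 hle⟩
    rwa [add_sub_cancel_left, smul_smul, div_mul_cancel₀ _ hb1.ne', ← hpu] at this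

/-! ### Normals of `L` at nearby contact points meet -/

/-- Two monic quadratics that are nonpositive on the same set coincide, provided this set contains
`0`. -/
lemma quad_eq {b₁ b₂ c₁ c₂ : ℝ} (h1 : c₁ ≤ 0) (h2 : c₂ ≤ 0)
    (h : ∀ t : ℝ, t ^ 2 + 2 * b₁ * t + c₁ ≤ 0 ↔ t ^ 2 + 2 * b₂ * t + c₂ ≤ 0) :
    b₁ = b₂ ∧ c₁ = c₂ := by
  have hs1 := Real.sq_sqrt (show 0 ≤ b₁ ^ 2 - c₁ by nlinarith [sq_nonneg b₁])
  have hs2 := Real.sq_sqrt (show 0 ≤ b₂ ^ 2 - c₂ by nlinarith [sq_nonneg b₂])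
  have hp1 := Real.sqrt_nonneg (b₁ ^ 2 - c₁)
  have hp2 := Real.sqrt_nonneg (b₂ ^ 2 - c₂)
  set r₁ := √(b₁ ^ 2 - c₁)
  set r₂ := √(b₂ ^ 2 - c₂)
  have e1 := abs_le_of_sq_le_sq' (a := -b₁ + r₁ + b₂) (b := r₂)
    (by nlinarith [(h (-b₁ + r₁)).1 (by nlinarith)]) hp2
  have e2 := abs_le_of_sq_le_sq' (a := -b₁ - r₁ + b₂) (b := r₂)
    (by nlinarith [(h (-b₁ - r₁)).1 (by nlinarith)]) hp2
  have e3 := abs_le_of_sq_le_sq' (a := -b₂ + r₂ + b₁) (b := r₁)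
    (by nlinarith [(h (-b₂ + r₂)).2 (by nlinarith)]) hp1
  have e4 := abs_le_of_sq_le_sq' (a := -b₂ - r₂ + b₁) (b := r₁)
    (by nlinarith [(h (-b₂ - r₂)).2 (by nlinarith)]) hp1
  have hb : b₁ = b₂ := by linarith [e1.1, e1.2, e2.1, e2.2, e3.1, e3.2, e4.1, e4.2]
  have hr : r₁ = r₂ := by linarith [e1.1, e1.2, e2.1, e2.2, e3.1, e3.2, e4.1, e4.2]
  refine ⟨hb, ?_⟩
  rw [hr] at hs1
  rw [hb] at hs1
  linarith

/-- Let two planes with unit normals `n₁, n₂` cut `K` in discs of equal radius `R` about `z₁, z₂`.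
If the normals make an acute angle and the centres are close, the planes meet inside `K`, so the
discs share a chord; both centres lie in the bisecting plane of that chord, at the same distance
from its ends, whence `z₁ - z₂` is parallel to `n₁ - n₂`. -/
lemma contact_pair {K : Set E3} {n₁ n₂ z₁ z₂ : E3} {R : ℝ} (hn₁ : ‖n₁‖ = 1) (hn₂ : ‖n₂‖ = 1)
    (hne : n₁ ≠ n₂) (hk : 0 ≤ (⟪n₁, n₂⟫ : ℝ))
    (h12 : (⟪n₁, z₂⟫ : ℝ) ≤ ⟪n₁, z₁⟫) (h21 : (⟪n₂, z₁⟫ : ℝ) ≤ ⟪n₂, z₂⟫)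
    (hd₁ : ∀ p : E3, (⟪n₁, p⟫ : ℝ) = ⟪n₁, z₁⟫ → (p ∈ K ↔ ‖p - z₁‖ ≤ R))
    (hd₂ : ∀ p : E3, (⟪n₂, p⟫ : ℝ) = ⟪n₂, z₂⟫ → (p ∈ K ↔ ‖p - z₂‖ ≤ R))
    (hclose : 2 * ‖z₁ - z₂‖ ≤ R) : ∃ l : ℝ, z₁ - z₂ = l • (n₁ - n₂) := by
  have h11 : (⟪n₁, n₁⟫ : ℝ) = 1 := by rw [real_inner_self_eq_norm_sq, hn₁]; norm_num
  have h22 : (⟪n₂, n₂⟫ : ℝ) = 1 := by rw [real_inner_self_eq_norm_sq, hn₂]; norm_num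
  have hk1 : (⟪n₁, n₂⟫ : ℝ) < 1 := (inner_lt_one_iff_real_of_norm_eq_one hn₁ hn₂).2 hne
  have hk' : (⟪n₂, n₁⟫ : ℝ) = ⟪n₁, n₂⟫ := real_inner_comm _ _
  set k : ℝ := ⟪n₁, n₂⟫ with hkdef
  have hR : 0 ≤ R := by linarith [norm_nonneg (z₁ - z₂)]
  have hkk : 0 < 1 - k ^ 2 := by nlinarith
  -- the point of the line of intersection of the planes that is nearest to `z₁`
  obtain ⟨p, hp1, hp2, hpR⟩ : ∃ p : E3, (⟪n₁, p⟫ : ℝ) = ⟪n₁, z₁⟫ ∧ (⟪n₂, p⟫ : ℝ) = ⟪n₂, z₂⟫ ∧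
      ‖p - z₁‖ ≤ R := by
    set s : ℝ := ⟪n₂, z₂⟫ - ⟪n₂, z₁⟫ with hs
    refine ⟨z₁ + (s / (1 - k ^ 2)) • (n₂ - k • n₁), ?_, ?_, ?_⟩
    · simp only [inner_add_right, inner_smul_right, inner_sub_right, h11, ← hkdef]
      ring
    · simp only [inner_add_right, inner_smul_right, inner_sub_right, h22, hk']
      field_simp
      rw [hs]; ring
    · rw [add_sub_cancel_left]
      apply abs_le_of_sq_le_sq' _ hR |>.2
      have hv : ‖(s / (1 - k ^ 2)) • (n₂ - k • n₁)‖ ^ 2 = s ^ 2 / (1 - k ^ 2) := by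
        rw [← real_inner_self_eq_norm_sq]
        simp only [inner_smul_right, real_inner_smul_left, inner_sub_right, inner_sub_left,
          h11, h22, hk', ← hkdef]
        field_simp
        ring
      rw [hv, div_le_iff₀ hkk]
      have hs0 : 0 ≤ s := by rw [hs]; linarith
      have hs1 : s ≤ ‖n₂ - n₁‖ * ‖z₂ - z₁‖ := by
        refine le_trans ?_ (real_inner_le_norm _ _)
        simp only [inner_sub_left, inner_sub_right, hs]
        linarith
      have hnn : ‖n₂ - n₁‖ ^ 2 = 2 - 2 * k := by
        rw [norm_sub_sq_real, hn₁, hn₂, hk']; ring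
      rw [norm_sub_rev z₁] at hclose
      have hs2 : s ^ 2 ≤ (2 - 2 * k) * ‖z₂ - z₁‖ ^ 2 := by
        rw [← hnn, ← mul_pow]
        exact pow_le_pow_left₀ hs0 hs1 2
      have hD : 4 * ‖z₂ - z₁‖ ^ 2 ≤ R ^ 2 := by nlinarith [norm_nonneg (z₂ - z₁)]
      have h1k : 0 ≤ 1 - k := by linarith
      have hfac : 1 - k ^ 2 = (1 - k) * (1 + k) := by ring
      rw [hfac]
      nlinarith [mul_nonneg h1k (sq_nonneg ‖z₂ - z₁‖), mul_nonneg h1k (sq_nonneg R),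
        mul_nonneg (mul_nonneg h1k hk) (sq_nonneg R), mul_le_mul_of_nonneg_left hD h1k]
  have hpK : p ∈ K := (hd₁ p hp1).2 hpR
  have hpR2 : ‖p - z₂‖ ≤ R := (hd₂ p hp2).1 hpK
  have hchord : ∀ u : E3, ‖u‖ = 1 → ⟪n₁, u⟫ = 0 → ⟪n₂, u⟫ = 0 →
      (⟪p - z₁, u⟫ : ℝ) = ⟪p - z₂, u⟫ ∧ ‖p - z₁‖ ^ 2 - R ^ 2 = ‖p - z₂‖ ^ 2 - R ^ 2 := by
    intro u hu hu1 hu2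
    have hexp : ∀ (z : E3) (t : ℝ), ‖p + t • u - z‖ ≤ R ↔
        t ^ 2 + 2 * ⟪p - z, u⟫ * t + (‖p - z‖ ^ 2 - R ^ 2) ≤ 0 := by
      intro z t
      have : p + t • u - z = (p - z) + t • u := by abel
      rw [← pow_le_pow_iff_left₀ (norm_nonneg _) hR two_ne_zero, this, norm_add_sq_real,
        inner_smul_right, norm_smul, hu, mul_one, Real.norm_eq_abs, sq_abs]
      constructor <;> intro h <;> linarith
    apply quad_eq
    · nlinarith [norm_nonneg (p - z₁)]
    · nlinarith [norm_nonneg (p - z₂)]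
    · intro t
      rw [← hexp z₁ t, ← hexp z₂ t, ← hd₁, ← hd₂]
      · rw [inner_add_right, inner_smul_right, hu2, hp2, mul_zero, add_zero]
      · rw [inner_add_right, inner_smul_right, hu1, hp1, mul_zero, add_zero]
  have hnorm : ‖p - z₁‖ ^ 2 = ‖p - z₂‖ ^ 2 := by
    obtain ⟨u, hu, hu1, hu2⟩ := exists_orthogonal_pair n₁ n₂
    linarith [(hchord u hu hu1 hu2).2]
  have hspan : z₁ - z₂ ∈ Submodule.span ℝ {n₁, n₂} := by
    rw [← Submodule.orthogonal_orthogonal (Submodule.span ℝ {n₁, n₂}), Submodule.mem_orthogonal]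
    intro v hv
    have hv1 := (Submodule.mem_orthogonal _ _).1 hv n₁ (Submodule.subset_span (by simp))
    have hv2 := (Submodule.mem_orthogonal _ _).1 hv n₂ (Submodule.subset_span (by simp))
    rcases eq_or_ne v 0 with rfl | hv0
    · simp
    have h := (hchord (‖v‖⁻¹ • v) (by simp [norm_smul, hv0])
      (by rw [inner_smul_right, hv1, mul_zero]) (by rw [inner_smul_right, hv2, mul_zero])).1
    rw [inner_smul_right, inner_smul_right] at h
    have h' := mul_left_cancel₀ (inv_ne_zero (norm_ne_zero_iff.2 hv0)) h
    rw [inner_sub_left, inner_sub_left] at h'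
    rw [real_inner_comm, inner_sub_left]
    linarith
  obtain ⟨α, β, hαβ⟩ := Submodule.mem_span_pair.1 hspan
  have hq : p - z₂ = (p - z₁) + (α • n₁ + β • n₂) := by rw [hαβ]; abel
  have e1 : (⟪n₁, p - z₁⟫ : ℝ) = 0 := by rw [inner_sub_right, hp1, sub_self]
  have e2 : (⟪n₂, p - z₁⟫ : ℝ) + α * k + β = 0 := by
    have : (⟪n₂, p - z₂⟫ : ℝ) = 0 := by rw [inner_sub_right, hp2, sub_self]
    rw [hq] at this
    simp only [inner_add_right, inner_smul_right, h22, hk'] at this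
    linarith
  have e3 : α ^ 2 = β ^ 2 := by
    rw [hq, norm_add_sq_real, ← real_inner_self_eq_norm_sq (α • n₁ + β • n₂)] at hnorm
    simp only [inner_add_right, inner_add_left, inner_smul_right, real_inner_smul_left, h11, h22,
      hk', ← hkdef, real_inner_comm n₁ (p - z₁), real_inner_comm n₂ (p - z₁)] at hnorm
    rw [e1] at hnorm
    linear_combination -hnorm - 2 * β * e2
  have e4 : 0 ≤ α + β * k := by
    have : (⟪n₁, z₁ - z₂⟫ : ℝ) = α + β * k := by
      rw [← hαβ]; simp only [inner_add_right, inner_smul_right, h11, ← hkdef]; ring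
    rw [← this, inner_sub_right]; linarith
  have e5 : α * k + β ≤ 0 := by
    have : (⟪n₂, z₁ - z₂⟫ : ℝ) = α * k + β := by
      rw [← hαβ]; simp only [inner_add_right, inner_smul_right, h22, hk']; ring
    rw [← this, inner_sub_right]; linarith
  refine ⟨α, ?_⟩
  rw [← hαβ]
  rcases sq_eq_sq_iff_eq_or_eq_neg.1 e3 with h | h
  · -- the supporting inequalities exclude the reflected solution
    have hα : β = 0 := by rw [h] at e4 e5; nlinarith
    rw [h, hα]; simp
  · rw [h]; module

/-- If the support plane with normal `n₀` touches `L` only at `z₀`, then the contact points of the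
support planes with normals near `n₀` are close to `z₀`. -/
lemma contact_continuous {L : Set E3} (hL : IsCompact L) {n₀ z₀ : E3} (hz₀ : z₀ ∈ L)
    (huniq : ∀ y ∈ L, (⟪n₀, z₀⟫ : ℝ) ≤ ⟪n₀, y⟫ → y = z₀) {ε : ℝ} (hε : 0 < ε) :
    ∃ δ > 0, ∀ n z : E3, z ∈ L → (∀ y ∈ L, (⟪n, y⟫ : ℝ) ≤ ⟪n, z⟫) → ‖n - n₀‖ < δ →
      ‖z - z₀‖ < ε := by
  have hA : IsCompact (L ∩ {y | ε ≤ ‖y - z₀‖}) :=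
    hL.inter_right (isClosed_le continuous_const (by fun_prop))
  rcases (L ∩ {y | ε ≤ ‖y - z₀‖}).eq_empty_or_nonempty with hemp | hne
  · refine ⟨1, one_pos, fun n z hz _ _ => ?_⟩
    by_contra hcon
    have : z ∈ L ∩ {y | ε ≤ ‖y - z₀‖} := ⟨hz, not_lt.1 hcon⟩
    rw [hemp] at this
    exact this
  obtain ⟨y, hy, hymax⟩ := hA.exists_isMaxOn hne
    (f := fun y : E3 => (⟪n₀, y⟫ : ℝ)) (by fun_prop)
  obtain ⟨D, hD⟩ := hL.isBounded.subset_closedBall z₀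
  have hgap : (⟪n₀, y⟫ : ℝ) < ⟪n₀, z₀⟫ := by
    by_contra hcon
    have := huniq y hy.1 (not_lt.1 hcon)
    have h2 : ε ≤ ‖y - z₀‖ := hy.2
    rw [this, sub_self, norm_zero] at h2
    linarith
  have hD0 : 0 ≤ D := by simpa using hD hz₀
  refine ⟨(⟪n₀, z₀⟫ - ⟪n₀, y⟫) / (D + 1), div_pos (sub_pos.2 hgap) (by linarith),
    fun n z hz hmax hn => ?_⟩
  by_contra hcon
  have h1 : (⟪n₀, z⟫ : ℝ) ≤ ⟪n₀, y⟫ := hymax ⟨hz, not_lt.1 hcon⟩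
  have h2 := hmax z₀ hz₀
  have h3 := real_inner_le_norm (n - n₀) (z - z₀)
  have h4 : ‖z - z₀‖ ≤ D := by simpa [dist_eq_norm] using hD hz
  rw [lt_div_iff₀ (by linarith)] at hn
  simp only [inner_sub_left, inner_sub_right] at h3
  nlinarith [norm_nonneg (n - n₀), norm_nonneg (z - z₀),
    mul_le_mul_of_nonneg_left h4 (norm_nonneg (n - n₀))]

/-- Three distinct unit vectors are not collinear, so a relation `a (n - n₀) = b (n₁ - n₀)` has
`a = b` (namely `0`, unless `n = n₁`). -/
lemma factor_eq {n₀ n₁ n : E3} (h₀ : ‖n₀‖ = 1) (h₁ : ‖n₁‖ = 1) (h : ‖n‖ = 1) (hne₁ : n₁ ≠ n₀)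
    (hne : n ≠ n₀) {a b : ℝ} (hab : a • (n - n₀) = b • (n₁ - n₀)) : a = b := by
  have hA : 0 < ‖n - n₀‖ ^ 2 := by have := norm_pos_iff.2 (sub_ne_zero.2 hne); positivity
  have hB : 0 < ‖n₁ - n₀‖ ^ 2 := by have := norm_pos_iff.2 (sub_ne_zero.2 hne₁); positivity
  have hin : ∀ m : E3, ‖m‖ = 1 → (⟪n₀, m - n₀⟫ : ℝ) = -‖m - n₀‖ ^ 2 / 2 := by
    intro m hm
    rw [norm_sub_sq_real, inner_sub_right, real_inner_self_eq_norm_sq, hm, h₀,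
      real_inner_comm n₀ m]
    ring
  have e1 : a * ‖n - n₀‖ ^ 2 = b * ‖n₁ - n₀‖ ^ 2 := by
    have := congrArg (fun v : E3 => (⟪n₀, v⟫ : ℝ)) hab
    simp only [inner_smul_right, hin n h, hin n₁ h₁] at this
    linarith
  have e2 : a ^ 2 * ‖n - n₀‖ ^ 2 = b ^ 2 * ‖n₁ - n₀‖ ^ 2 := by
    have := congrArg (fun v : E3 => ‖v‖ ^ 2) hab
    simpa only [norm_smul, mul_pow, Real.norm_eq_abs, sq_abs] using this
  have e3 : b * (a - b) = 0 := by
    have : (b * (a - b)) * ‖n₁ - n₀‖ ^ 2 = 0 := by linear_combination e2 - a * e1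
    exact (mul_eq_zero.1 this).resolve_right hB.ne'
  rcases mul_eq_zero.1 e3 with hb | hb
  · rw [hb, zero_mul] at e1
    rw [hb]
    exact (mul_eq_zero.1 e1).resolve_right hA.ne'
  · linarith

lemma exists_near_unit {n : E3} (hn : ‖n‖ = 1) {δ : ℝ} (hδ : 0 < δ) :
    ∃ m : E3, ‖m‖ = 1 ∧ m ≠ n ∧ ‖m - n‖ < δ := by
  obtain ⟨v, hv, hnv, -⟩ := exists_orthogonal_pair n n
  set γ : ℝ → E3 := fun t => Real.cos t • n + Real.sin t • v with hγ
  have hc : ContinuousAt γ 0 := by rw [hγ]; fun_prop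
  have h0 : γ 0 = n := by simp [hγ]
  obtain ⟨η, hη, h⟩ := Metric.continuousAt_iff.1 hc δ hδ
  have ht : 0 < min (η / 2) 1 := by positivity
  refine ⟨γ (min (η / 2) 1), ?_, ?_, ?_⟩
  · have : ‖γ (min (η / 2) 1)‖ ^ 2 = 1 := by
      rw [hγ]
      simp only
      rw [norm_add_sq_real, inner_smul_right, real_inner_smul_left, hnv, norm_smul, norm_smul, hn,
        hv, Real.norm_eq_abs, Real.norm_eq_abs, mul_one, mul_one, sq_abs, sq_abs]
      linarith [Real.sin_sq_add_cos_sq (min (η / 2) 1)]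
    exact (pow_eq_one_iff_of_nonneg (norm_nonneg _) two_ne_zero).1 this
  · intro heq
    have := congrArg (fun x : E3 => (⟪x, v⟫ : ℝ)) heq
    simp only [hγ, inner_add_left, real_inner_smul_left, hnv, real_inner_self_eq_norm_sq, hv]
      at this
    have hpos := Real.sin_pos_of_pos_of_lt_pi ht
      (lt_of_le_of_lt (min_le_right _ _) (by linarith [Real.pi_gt_three]))
    linarith
  · have := h (x := min (η / 2) 1) (by
      rw [Real.dist_eq, sub_zero, abs_of_pos ht]
      exact lt_of_le_of_lt (min_le_left _ _) (by linarith))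
    rwa [h0, dist_eq_norm] at this

/-- If `z m - z n` is parallel to `m - n` for nearby unit vectors `m, n`, then `z` is the
restriction of a homothety to the unit sphere: this holds locally, because the factor of
proportionality is shared by any three nearby vectors, and the sphere is connected. -/
lemma global_affine (z : E3 → E3)
    (hloc : ∀ n₀ : E3, ‖n₀‖ = 1 → ∃ δ > 0, ∀ m n : E3, ‖m‖ = 1 → ‖n‖ = 1 → ‖m - n₀‖ < δ →
      ‖n - n₀‖ < δ → m ≠ n → ∃ l : ℝ, z m - z n = l • (m - n)) :
    ∃ (c : E3) (l : ℝ), ∀ n : E3, ‖n‖ = 1 → z n = c + l • n := by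
  have hgerm : ∀ n₀ : E3, ∃ q : E3 × ℝ, ∃ δ > 0, ‖n₀‖ = 1 → ∀ n : E3, ‖n‖ = 1 → ‖n - n₀‖ < δ →
      z n = q.1 + q.2 • n := by
    intro n₀
    by_cases h₀ : ‖n₀‖ = 1
    swap
    · exact ⟨0, 1, one_pos, fun h => absurd h h₀⟩
    obtain ⟨δ, hδ, hl⟩ := hloc n₀ h₀
    obtain ⟨n₁, h₁, hne₁, hd₁⟩ := exists_near_unit h₀ hδ
    have hd₀ : ‖n₀ - n₀‖ < δ := by simpa using hδ
    obtain ⟨l, hl₁⟩ := hl n₁ n₀ h₁ h₀ hd₁ hd₀ hne₁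
    refine ⟨(z n₀ - l • n₀, l), δ, hδ, fun _ n hn hd => ?_⟩
    simp only
    rcases eq_or_ne n n₀ with rfl | hne₀
    · abel
    rcases eq_or_ne n n₁ with rfl | hne
    · rw [smul_sub] at hl₁
      rw [sub_eq_iff_eq_add.1 hl₁]; abel
    obtain ⟨l', hl'⟩ := hl n n₀ hn h₀ hd hd₀ hne₀
    obtain ⟨l'', hl''⟩ := hl n n₁ hn h₁ hd hd₁ hne
    have hll : l' - l'' = l - l'' := by
      apply factor_eq h₀ h₁ hn hne₁ hne₀
      have : l' • (n - n₀) - l • (n₁ - n₀) = l'' • (n - n₁) := by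
        rw [← hl', ← hl₁, ← hl'']; abel
      rw [sub_smul, sub_smul, sub_eq_sub_iff_sub_eq_sub, this]
      module
    have hll' : l' = l := by linarith
    rw [hll'] at hl'
    rw [sub_eq_iff_eq_add.1 hl']
    module
  choose q δ hδ hq using hgerm
  have hconst : ∀ m ∈ sphere (0 : E3) 1, ∀ n ∈ sphere (0 : E3) 1, q m = q n := by
    apply const_of_eventually (isPreconnected_sphere one_lt_rank_E3 0 1)
    intro n₀ hn₀
    rw [mem_sphere_zero_iff_norm] at hn₀
    refine ⟨ball n₀ (δ n₀), ball_mem_nhds _ (hδ n₀), fun n hn hn1 => ?_⟩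
    rw [mem_sphere_zero_iff_norm] at hn1
    rw [mem_ball, dist_eq_norm] at hn
    -- compare the two homotheties at `n` and at a second unit vector near `n`
    obtain ⟨m, hm, hmn, hd⟩ := exists_near_unit hn1
      (δ := min (δ n) (δ n₀ - ‖n - n₀‖)) (lt_min (hδ n) (by linarith))
    have hm₀ : ‖m - n₀‖ < δ n₀ := by
      have := norm_sub_le_norm_sub_add_norm_sub m n n₀
      linarith [lt_of_lt_of_le hd (min_le_right _ _)]
    have e1 := hq n hn1 n hn1 (by simpa using hδ n)
    have e2 := hq n hn1 m hm (lt_of_lt_of_le hd (min_le_left _ _))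
    have e3 := hq n₀ hn₀ n hn1 hn
    have e4 := hq n₀ hn₀ m hm hm₀
    rw [e1] at e3
    rw [e2] at e4
    have h5 : ((q n).2 - (q n₀).2) • (m - n) = 0 := by
      have : ((q n).2 - (q n₀).2) • (m - n) =
        (((q n).1 + (q n).2 • m) - ((q n₀).1 + (q n₀).2 • m)) -
          (((q n).1 + (q n).2 • n) - ((q n₀).1 + (q n₀).2 • n)) := by module
      rw [this, e3, e4]; simp
    have h6 : (q n).2 = (q n₀).2 :=
      sub_eq_zero.1 ((smul_eq_zero.1 h5).resolve_right (sub_ne_zero.2 hmn))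
    rw [h6] at e3
    exact Prod.ext (add_right_cancel e3) h6
  obtain ⟨e, he, -⟩ := exists_orthogonal_pair 0 0
  refine ⟨(q e).1, (q e).2, fun n hn => ?_⟩
  rw [hconst e (by simpa using he) n (by simpa using hn)]
  exact hq n hn n hn (by simpa using hδ n)

/-! ### Conclusion -/

/-- The centre, and the radius of `L`, come from the formula `z n = c + l n` for the contact
points; `K` is then recovered from its sections by the support planes of the ball `L`. -/
lemma balls_of_contact {K L : Set E3} (hLcpt : IsCompact L) (hLconv : Convex ℝ L) (hLK : L ⊆ K)
    {R l : ℝ} (hR : 0 ≤ R) {c : E3} (hmem : ∀ n : E3, ‖n‖ = 1 → c + l • n ∈ L)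
    (hmax : ∀ n : E3, ‖n‖ = 1 → ∀ y ∈ L, (⟪n, y⟫ : ℝ) ≤ ⟪n, c + l • n⟫)
    (hdisc : ∀ n : E3, ‖n‖ = 1 → ∀ p : E3, (⟪n, p⟫ : ℝ) = ⟪n, c + l • n⟫ →
      (p ∈ K ↔ ‖p - (c + l • n)‖ ≤ R)) :
    K = closedBall c √(l ^ 2 + R ^ 2) ∧ L = closedBall c l := by
  have hinn : ∀ n : E3, ‖n‖ = 1 → (⟪n, c + l • n⟫ : ℝ) = ⟪n, c⟫ + l := by
    intro n hn
    rw [inner_add_right, inner_smul_right, real_inner_self_eq_norm_sq, hn]; ring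
  have hl : 0 ≤ l := by
    obtain ⟨e, he, -⟩ := exists_orthogonal_pair 0 0
    have := hmax e he _ (hmem (-e) (by rwa [norm_neg]))
    rw [hinn e he, inner_add_right, inner_smul_right, inner_neg_right,
      real_inner_self_eq_norm_sq, he] at this
    linarith
  have hLeq : L = closedBall c l := by
    apply Subset.antisymm
    · intro y hy
      rw [mem_closedBall, dist_eq_norm]
      rcases eq_or_ne y c with rfl | hne
      · simpa using hl
      have hpos : 0 < ‖y - c‖ := norm_pos_iff.2 (sub_ne_zero.2 hne)
      have hn1 : ‖‖y - c‖⁻¹ • (y - c)‖ = 1 := by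
        rw [norm_smul, norm_inv, norm_norm, inv_mul_cancel₀ hpos.ne']
      have := hmax _ hn1 y hy
      rw [hinn _ hn1] at this
      have h2 : (⟪‖y - c‖⁻¹ • (y - c), y⟫ : ℝ) - ⟪‖y - c‖⁻¹ • (y - c), c⟫ = ‖y - c‖ := by
        rw [← inner_sub_right, real_inner_smul_left, real_inner_self_eq_norm_sq, sq,
          inv_mul_cancel_left₀ hpos.ne']
      linarith
    · intro y hy
      rw [mem_closedBall, dist_eq_norm] at hy
      by_contra hnot
      obtain ⟨f, s, h1, h2⟩ := geometric_hahn_banach_closed_point hLconv hLcpt.isClosed hnot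
      obtain ⟨m, hm⟩ := exists_inner_eq f
      rcases eq_or_ne m 0 with rfl | hm0
      · obtain ⟨e, he, -⟩ := exists_orthogonal_pair 0 0
        have h3 := h1 _ (hmem e he)
        rw [hm] at h2 h3
        simp only [inner_zero_left] at h2 h3
        linarith
      have hpos : 0 < ‖m‖ := norm_pos_iff.2 hm0
      have h3 := h1 _ (hmem (‖m‖⁻¹ • m) (by
        rw [norm_smul, norm_inv, norm_norm, inv_mul_cancel₀ hpos.ne']))
      rw [hm, inner_add_right, inner_smul_right, inner_smul_right, real_inner_self_eq_norm_sq, sq,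
        inv_mul_cancel_left₀ hpos.ne'] at h3
      rw [hm] at h2
      have h4 := real_inner_le_norm m (y - c)
      rw [inner_sub_right] at h4
      nlinarith [mul_le_mul_of_nonneg_left hy hpos.le]
  refine ⟨?_, hLeq⟩
  ext p
  rw [mem_closedBall, dist_eq_norm]
  rcases le_or_gt ‖p - c‖ l with hpl | hpl
  · have hpL : p ∈ L := by rw [hLeq, mem_closedBall, dist_eq_norm]; exact hpl
    refine iff_of_true (hLK hpL) (Real.le_sqrt_of_sq_le ?_)
    nlinarith [norm_nonneg (p - c), sq_nonneg R]
  -- a support plane of the ball `L` through the outer point `p`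
  obtain ⟨n, hn, hnp⟩ : ∃ n : E3, ‖n‖ = 1 ∧ (⟪n, p - c⟫ : ℝ) = l := by
    have hpos : 0 < ‖p - c‖ := hl.trans_lt hpl
    set u := ‖p - c‖⁻¹ • (p - c) with hu
    have hu1 : ‖u‖ = 1 := by
      rw [hu, norm_smul, norm_inv, norm_norm, inv_mul_cancel₀ hpos.ne']
    have hup : (⟪u, p - c⟫ : ℝ) = ‖p - c‖ := by
      rw [hu, real_inner_smul_left, real_inner_self_eq_norm_sq, sq, inv_mul_cancel_left₀ hpos.ne']
    obtain ⟨n, hn, hnl⟩ := (isPreconnected_sphere one_lt_rank_E3 (0 : E3) 1).intermediate_value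
      (a := -u) (b := u) (f := fun n : E3 => (⟪n, p - c⟫ : ℝ)) (by simpa using hu1)
      (by simpa using hu1) (by fun_prop)
      (show l ∈ _ from ⟨by rw [inner_neg_left, hup]; linarith, by rw [hup]; exact hpl.le⟩)
    exact ⟨n, by simpa using hn, hnl⟩
  have hpn : (⟪n, p⟫ : ℝ) = ⟪n, c + l • n⟫ := by
    rw [hinn n hn]
    rw [inner_sub_right] at hnp
    linarith
  rw [hdisc n hn p hpn]
  have hsq : ‖p - (c + l • n)‖ ^ 2 = ‖p - c‖ ^ 2 - l ^ 2 := by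
    rw [← sub_sub, norm_sub_sq_real, inner_smul_right, real_inner_comm, hnp, norm_smul, hn,
      Real.norm_eq_abs, mul_one, sq_abs]
    ring
  rw [Real.le_sqrt (norm_nonneg _) (by positivity), ← pow_le_pow_iff_left₀ (norm_nonneg _) hR
    two_ne_zero, hsq]
  constructor <;> intro h <;> linarith

/-- If for every boundary point `x` of `M` all planar sections of `K` supporting `L`
and passing through `x` have the same constant width `h x`, then `K` and `L` are
concentric balls. -/
theorem stmt_8 (K L M : Set E3)
    (hKcpt : IsCompact K) (hKconv : Convex ℝ K) (hKint : (interior K).Nonempty)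
    (hLcpt : IsCompact L) (hLconv : Convex ℝ L) (hLint : (interior L).Nonempty)
    (hMcpt : IsCompact M) (hMconv : Convex ℝ M) (hMint : (interior M).Nonempty)
    (hLK : L ⊆ interior K) (hKM : K ⊆ interior M)
    (h : E3 → ℝ)
    (hwidth : ∀ x ∈ frontier M, ∀ w : E3, w ≠ 0 →
      PlaneSupports L w ⟪w, x⟫ → HasConstWidthIn (planeEq w ⟪w, x⟫ ∩ K) w (h x)) :
    ∃ (c : E3) (r s : ℝ), K = Metric.closedBall c r ∧ L = Metric.closedBall c s := by
  have hLne : L.Nonempty := hLint.mono interior_subset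
  have hLK' : L ⊆ K := hLK.trans interior_subset
  obtain ⟨b, hb⟩ := exists_common_width hLcpt hLconv hLne hMcpt hMconv hMint
    (hLK'.trans hKM) h hwidth
  have hne0 : ∀ n : E3, ‖n‖ = 1 → n ≠ 0 := by
    rintro n hn rfl
    simp at hn
  have hdisc : ∀ n z : E3, ‖n‖ = 1 → z ∈ L → (∀ y ∈ L, (⟪n, y⟫ : ℝ) ≤ ⟪n, z⟫) → ∀ p : E3,
      (⟪n, p⟫ : ℝ) = ⟪n, z⟫ → (p ∈ K ↔ ‖p - z‖ ≤ b / 2) :=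
    fun n z hn hz hmax => section_eq_disc hKcpt hKconv hLcpt hLK' hb (hne0 n hn) hz hmax
  have hz : ∀ n : E3, ∃ z ∈ L, ∀ y ∈ L, (⟪n, y⟫ : ℝ) ≤ ⟪n, z⟫ := fun n =>
    hLcpt.exists_isMaxOn hLne (f := fun y : E3 => (⟪n, y⟫ : ℝ)) (by fun_prop)
  choose z hzL hzmax using hz
  -- the radius is positive because contact points are interior to `K`
  have hR : 0 < b / 2 := by
    obtain ⟨e, he, -⟩ := exists_orthogonal_pair 0 0
    obtain ⟨u, hu, heu, -⟩ := exists_orthogonal_pair e e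
    obtain ⟨ε, hε, hball⟩ := Metric.isOpen_iff.1 isOpen_interior _ (hLK (hzL e))
    have hmem : z e + (ε / 2) • u ∈ K := by
      apply interior_subset (hball _)
      rw [mem_ball, dist_eq_norm, add_sub_cancel_left, norm_smul, hu, Real.norm_of_nonneg
        (by positivity)]
      linarith
    have := (hdisc e (z e) he (hzL e) (hzmax e) _ (by
      rw [inner_add_right, inner_smul_right, heu, mul_zero, add_zero])).1 hmem
    rw [add_sub_cancel_left, norm_smul, hu, Real.norm_of_nonneg (by positivity)] at this
    linarith
  -- a second contact point `y` would be a second centre of the same disc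
  have huniq : ∀ n : E3, ‖n‖ = 1 → ∀ y ∈ L, (⟪n, z n⟫ : ℝ) ≤ ⟪n, y⟫ → y = z n := by
    intro n hn y hy hle
    by_contra hne
    have heq : (⟪n, y⟫ : ℝ) = ⟪n, z n⟫ := le_antisymm (hzmax n y hy) hle
    have hpos : 0 < ‖y - z n‖ := norm_pos_iff.2 (sub_ne_zero.2 hne)
    set p := y + (b / 2 / ‖y - z n‖) • (y - z n) with hp
    have hpn : (⟪n, p⟫ : ℝ) = ⟪n, y⟫ := by
      rw [hp, inner_add_right, inner_smul_right, inner_sub_right, heq]; ring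
    have hpK : p ∈ K := by
      rw [hdisc n y hn hy (fun x hx => (hzmax n x hx).trans hle) p hpn, hp, add_sub_cancel_left,
        norm_smul, Real.norm_of_nonneg (by positivity), div_mul_cancel₀ _ hpos.ne']
    have h1 := (hdisc n (z n) hn (hzL n) (hzmax n) p (hpn.trans heq)).1 hpK
    have h2 : p - z n = (1 + b / 2 / ‖y - z n‖) • (y - z n) := by rw [hp]; module
    rw [h2, norm_smul, Real.norm_of_nonneg (by positivity), add_mul,
      div_mul_cancel₀ _ hpos.ne'] at h1
    linarith
  obtain ⟨c, l, hcl⟩ := global_affine z (by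
    intro n₀ hn₀
    obtain ⟨δ, hδ, hcont⟩ := contact_continuous hLcpt (hzL n₀) (huniq n₀ hn₀)
      (ε := b / 8) (by linarith)
    refine ⟨min δ (1 / 2), lt_min hδ (by norm_num), fun m n hm hn hmd hnd hmn => ?_⟩
    have hzm := hcont m (z m) (hzL m) (hzmax m) (lt_of_lt_of_le hmd (min_le_left _ _))
    have hzn := hcont n (z n) (hzL n) (hzmax n) (lt_of_lt_of_le hnd (min_le_left _ _))
    have hmd' := lt_of_lt_of_le hmd (min_le_right _ _)
    have hnd' := lt_of_lt_of_le hnd (min_le_right _ _)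
    have hdist : ‖m - n‖ ≤ 1 := by
      have := norm_sub_le_norm_sub_add_norm_sub m n₀ n
      rw [norm_sub_rev n₀ n] at this
      linarith
    refine contact_pair (R := b / 2) hm hn hmn ?_ (hzmax m _ (hzL n)) (hzmax n _ (hzL m))
      (hdisc m (z m) hm (hzL m) (hzmax m)) (hdisc n (z n) hn (hzL n) (hzmax n)) ?_
    · have := norm_sub_sq_real m n
      rw [hm, hn] at this
      nlinarith [norm_nonneg (m - n)]
    · have := norm_sub_le_norm_sub_add_norm_sub (z m) (z n₀) (z n)
      rw [norm_sub_rev (z n₀) (z n)] at this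
      linarith)
  have := balls_of_contact (K := K) hLcpt hLconv hLK' hR.le (c := c) (l := l)
    (fun n hn => hcl n hn ▸ hzL n) (fun n hn => hcl n hn ▸ hzmax n)
    (fun n hn => hcl n hn ▸ hdisc n (z n) hn (hzL n) (hzmax n))
  exact ⟨c, _, _, this⟩
end
end

section
/- Let K ⊂ ℝ³ be a convex body and let p be a point in its interior. If every 2-dimensional plane section of K through p is a planar convex set of constant width 1, then K is a body of constant width 1, i.e., for every unit vector u ∈ S² the difference between the supremum and infimum of ⟨x, u⟩ over x ∈ K equals 1. -/
/-!
Two points `x, y ∈ K` lie, together with `p`, in a common plane section of `K`. That section has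
width `1` in the direction of `x - y`, so `dist x y ≤ 1`; hence the width of `K` is at most `1` in
every direction. Conversely, any section through `p` parallel to `u` is contained in `K` and has
width `1` in direction `u`, so the width of `K` in direction `u` is at least `1`.
-/

open Metric Set
open scoped RealInnerProductSpace

noncomputable section

lemma exists_unit_orthogonal (a b : E3) : ∃ w : E3, ‖w‖ = 1 ∧ ⟪w, a⟫ = 0 ∧ ⟪w, b⟫ = 0 := by
  classical
  -- The span of two vectors is a proper subspace of a three-dimensional space.
  have hlt : Module.finrank ℝ (Submodule.span ℝ ({a, b} : Set E3)) < Module.finrank ℝ E3 := by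
    have h := finrank_span_finset_le_card (R := ℝ) ({a, b} : Finset E3)
    have h2 := Finset.card_le_two (a := a) (b := b)
    rw [Finset.coe_pair] at h
    rw [finrank_euclideanSpace_fin]
    exact (h.trans h2).trans_lt (by norm_num)
  have hne : (Submodule.span ℝ ({a, b} : Set E3))ᗮ ≠ ⊥ := by
    intro h
    rw [Submodule.orthogonal_eq_bot_iff] at h
    rw [h, finrank_top] at hlt
    exact lt_irrefl _ hlt
  obtain ⟨v, hv, hv0⟩ := Submodule.exists_mem_ne_zero_of_ne_bot hne
  rw [Submodule.mem_orthogonal'] at hv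
  refine ⟨‖v‖⁻¹ • v, norm_smul_inv_norm hv0, ?_, ?_⟩
  · rw [real_inner_smul_left, hv a (Submodule.subset_span (by simp)), mul_zero]
  · rw [real_inner_smul_left, hv b (Submodule.subset_span (by simp)), mul_zero]

lemma isCompact_inner_image {K : Set E3} (hK : IsCompact K) (u : E3) :
    IsCompact ((fun x : E3 => ⟪x, u⟫) '' K) :=
  hK.image (by fun_prop)

lemma widthIn_mono {S K : Set E3} (hK : IsCompact K) (hSK : S ⊆ K) (hS : S.Nonempty) (u : E3) :
    widthIn S u ≤ widthIn K u := by
  have hc := isCompact_inner_image hK u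
  exact sub_le_sub
    (csSup_le_csSup hc.bddAbove (hS.image _) (image_mono hSK))
    (csInf_le_csInf hc.bddBelow (hS.image _) (image_mono hSK))

lemma inner_sub_le_widthIn {S K : Set E3} (hK : IsCompact K) (hSK : S ⊆ K) {x y : E3}
    (hx : x ∈ S) (hy : y ∈ S) (u : E3) : ⟪x - y, u⟫ ≤ widthIn S u := by
  have hc := isCompact_inner_image hK u
  rw [inner_sub_left]
  exact sub_le_sub
    (le_csSup (hc.bddAbove.mono (image_mono hSK)) (mem_image_of_mem _ hx))
    (csInf_le (hc.bddBelow.mono (image_mono hSK)) (mem_image_of_mem _ hy))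

/-- The diameter of `K` is at most `1`: two points of `K` and `p` lie in a common section. -/
lemma norm_sub_le_one {K : Set E3} (hK : IsCompact K) {p : E3}
    (hwidth : ∀ w : E3, ‖w‖ = 1 → HasConstWidthIn (planeEq w ⟪w, p⟫ ∩ K) w 1)
    {x y : E3} (hx : x ∈ K) (hy : y ∈ K) : ‖x - y‖ ≤ 1 := by
  rcases eq_or_ne (x - y) 0 with h0 | h0
  · simp [h0]
  obtain ⟨w, hw, hwx, hwy⟩ := exists_unit_orthogonal (x - p) (y - p)
  rw [inner_sub_right, sub_eq_zero] at hwx hwy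
  have hwd : ⟪‖x - y‖⁻¹ • (x - y), w⟫ = 0 := by
    rw [real_inner_smul_left, real_inner_comm, inner_sub_right, hwx, hwy, sub_self, mul_zero]
  have h := inner_sub_le_widthIn hK inter_subset_right
    (show x ∈ planeEq w ⟪w, p⟫ ∩ K from ⟨hwx, hx⟩) ⟨hwy, hy⟩ (‖x - y‖⁻¹ • (x - y))
  rw [hwidth w hw (‖x - y‖⁻¹ • (x - y)) (norm_smul_inv_norm h0) hwd, real_inner_smul_right,
    real_inner_self_eq_norm_sq, pow_two, inv_mul_cancel_left₀ (norm_ne_zero_iff.mpr h0)] at h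
  exact h

/-- If every 2-dimensional plane section of `K` through the interior point `p` has
constant width `1`, then `K` is a body of constant width `1`. -/
theorem stmt_11 (K : Set E3)
    (hKcpt : IsCompact K) (hKconv : Convex ℝ K) (hKint : (interior K).Nonempty)
    (p : E3) (hp : p ∈ interior K)
    (hwidth : ∀ w : E3, ‖w‖ = 1 →
      HasConstWidthIn (planeEq w ⟪w, p⟫ ∩ K) w 1) :
    ∀ u : E3, ‖u‖ = 1 → widthIn K u = 1 := by
  intro u hu
  apply le_antisymm
  · have hc := isCompact_inner_image hKcpt u
    have hne : ((fun x : E3 => ⟪x, u⟫) '' K).Nonempty := ⟨_, mem_image_of_mem _ (interior_subset hp)⟩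
    obtain ⟨x, hx, hxs⟩ := hc.sSup_mem hne
    obtain ⟨y, hy, hys⟩ := hc.sInf_mem hne
    calc widthIn K u = ⟪x - y, u⟫ := by rw [widthIn, ← hxs, ← hys, inner_sub_left]
      _ ≤ ‖x - y‖ * ‖u‖ := real_inner_le_norm _ _
      _ ≤ 1 := by rw [hu, mul_one]; exact norm_sub_le_one hKcpt hwidth hx hy
  · obtain ⟨w, hw, hwu, -⟩ := exists_unit_orthogonal u u
    rw [← hwidth w hw u hu (by rw [real_inner_comm]; exact hwu)]
    have hpS : p ∈ planeEq w ⟪w, p⟫ ∩ K := ⟨rfl, interior_subset hp⟩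
    exact widthIn_mono hKcpt inter_subset_right ⟨p, hpS⟩ u
end
end
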